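/- arXiv:2312.06508 — 2 statements merged into one kernel-verified Lean document; each statement's English description precedes it below -/
import Mathlib

section
/- (Theorem 1, total asynchrony.) Let W ∈ ℝ^{n×n} be symmetric, entrywise nonnegative, stochastic with w_{ii} > 0; let each f_i : ℝ^d → ℝ be μ_i-strongly convex with L_i-Lipschitz gradient and each h_i : ℝ^d → ℝ ∪ {+∞} proper, closed, convex; let 0 < α < 2·min_i (w_{ii}/L_i). Consider iterates x^k ∈ (ℝ^d)^n, activation sets K_i ⊆ ℕ, and delay indices s_{ij}^k ∈ {0,…,k} with s_{ii}^k = k, satisfying the asynchronous Prox-DGD recursion: for k ∈ K_i, x_i^{k+1} = prox_{αh_i}( Σ_j w_{ij} x_j^{s_{ij}^k} − α∇f_i(x_i^k) ), and x_i^{k+1} = x_i^k for k ∉ K_i. Assume total asynchrony: each K_i is infinite and lim_{k→∞} s_{ij}^k = +∞ for all i and j with w_{ij} > 0. Then the sequence (x^k) converges to the unique point x* satisfying x*_i = prox_{αh_i}( Σ_j w_{ij} x*_j − α∇f_i(x*_i) ) for all i (a fixed point of synchronous Prox-DGD). -/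
open scoped RealInnerProductSpace
open Filter

/-- A function `h : ℝ^d → ℝ ∪ {+∞}` (modeled as `EReal`-valued, never `⊥`) is proper,
closed (lower semicontinuous), and convex. -/
def ProperClosedConvex {d : ℕ} (h : EuclideanSpace ℝ (Fin d) → EReal) : Prop :=
  (∃ x, h x ≠ ⊤) ∧ (∀ x, h x ≠ ⊥) ∧ LowerSemicontinuous h ∧
    ∀ x y : EuclideanSpace ℝ (Fin d), ∀ t : ℝ, 0 ≤ t → t ≤ 1 →
      h (t • x + (1 - t) • y) ≤ (t : EReal) * h x + ((1 - t : ℝ) : EReal) * h y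

/-- `IsProxPt α h u p` says `p` minimizes `y ↦ α·h(y) + ½‖y − u‖²`, i.e.
`p = prox_{αh}(u)`. -/
def IsProxPt {d : ℕ} (α : ℝ) (h : EuclideanSpace ℝ (Fin d) → EReal)
    (u p : EuclideanSpace ℝ (Fin d)) : Prop :=
  ∀ y, (α : EReal) * h p + ((1 / 2 * ‖p - u‖ ^ 2 : ℝ) : EReal)
      ≤ (α : EReal) * h y + ((1 / 2 * ‖y - u‖ ^ 2 : ℝ) : EReal)


section helpers

variable {d : ℕ}

lemma prox_finite {α : ℝ} (hα : 0 < α) {h : EuclideanSpace ℝ (Fin d) → EReal}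
    (hh : ProperClosedConvex h) {u p : EuclideanSpace ℝ (Fin d)} (hp : IsProxPt α h u p) :
    ∃ a : ℝ, h p = a := by
  obtain ⟨⟨y, hy⟩, hbot, -, -⟩ := hh
  lift h y to ℝ using ⟨hy, hbot y⟩ with b hb
  have h1 := hp y
  rw [← hb] at h1
  have : h p ≠ ⊤ := by
    intro ht
    rw [ht, EReal.coe_mul_top_of_pos hα, EReal.top_add_coe, ← EReal.coe_mul,
      ← EReal.coe_add] at h1
    exact EReal.coe_ne_top _ (top_le_iff.1 h1)
  exact ⟨(h p).toReal, (EReal.coe_toReal this (hbot p)).symm⟩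

lemma prox_opt {α : ℝ} (hα : 0 < α) {h : EuclideanSpace ℝ (Fin d) → EReal}
    (hh : ProperClosedConvex h) {u p : EuclideanSpace ℝ (Fin d)} (hp : IsProxPt α h u p)
    {a b : ℝ} (ha : h p = a) {y : EuclideanSpace ℝ (Fin d)} (hb : h y = b) :
    α * (a - b) ≤ ⟪p - u, y - p⟫ := by
  have key : ∀ t : ℝ, 0 < t → t ≤ 1 → α * (a - b) ≤ ⟪p - u, y - p⟫ + t * (1/2 * ‖y - p‖^2) := by
    intro t ht ht1
    have hc := hh.2.2.2 y p t ht.le ht1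
    have hz := hp (t • y + (1 - t) • p)
    rw [ha, hb, ← EReal.coe_mul, ← EReal.coe_mul, ← EReal.coe_add] at hc
    have h2 : (α : EReal) * h (t • y + (1 - t) • p) ≤ (α : EReal) * ((t * b + (1 - t) * a : ℝ) : EReal) :=
      mul_le_mul_of_nonneg_left hc (by exact_mod_cast hα.le)
    have h3 := hz.trans (add_le_add_left h2 _)
    rw [ha] at h3
    norm_cast at h3
    have e : t • y + (1 - t) • p - u = (p - u) + t • (y - p) := by
      module
    rw [e, norm_add_sq_real, inner_smul_right, norm_smul, mul_pow, Real.norm_eq_abs, sq_abs] at h3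
    have : t * (α * (a - b)) ≤ t * (⟪p - u, y - p⟫ + t * (1/2 * ‖y - p‖^2)) := by nlinarith
    exact le_of_mul_le_mul_left this ht
  by_contra hcon
  push Not at hcon
  set C := 1/2 * ‖y - p‖^2 with hC
  have hC0 : 0 ≤ C := by positivity
  set D := α * (a - b) - ⟪p - u, y - p⟫ with hD
  have hD0 : 0 < D := by linarith
  have := key (min 1 (D / (2 * (C + 1)))) (by positivity) (min_le_left _ _)
  have h5 : min 1 (D / (2 * (C + 1))) * C ≤ D / (2 * (C + 1)) * C :=
    mul_le_mul_of_nonneg_right (min_le_right _ _) hC0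
  have h6 : D / (2 * (C + 1)) * C ≤ D / 2 := by
    rw [div_mul_eq_mul_div, div_le_div_iff₀ (by positivity) (by norm_num)]
    nlinarith
  linarith

lemma prox_nonexp {α : ℝ} (hα : 0 < α) {h : EuclideanSpace ℝ (Fin d) → EReal}
    (hh : ProperClosedConvex h) {u p v q : EuclideanSpace ℝ (Fin d)} (hp : IsProxPt α h u p)
    (hq : IsProxPt α h v q) : ‖p - q‖ ≤ ‖u - v‖ := by
  obtain ⟨a, ha⟩ := prox_finite hα hh hp
  obtain ⟨b, hb⟩ := prox_finite hα hh hq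
  have h1 := prox_opt hα hh hp ha hb
  have h2 := prox_opt hα hh hq hb ha
  have e : ⟪p - u, q - p⟫ + ⟪q - v, p - q⟫ = ⟪u - v, p - q⟫ - ‖p - q‖^2 := by
    rw [← real_inner_self_eq_norm_sq, ← neg_sub p q, inner_neg_right, ← sub_eq_neg_add,
      ← inner_sub_left, ← inner_sub_left]
    congr 1
    abel
  have h3 := real_inner_le_norm (u - v) (p - q)
  have h4 : ‖p - q‖ * ‖p - q‖ ≤ ‖u - v‖ * ‖p - q‖ := by nlinarith
  rcases (norm_nonneg (p - q)).eq_or_lt with h0 | h0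
  · rw [← h0]; positivity
  · exact le_of_mul_le_mul_right h4 h0

lemma prox_exists {α : ℝ} (hα : 0 < α) {h : EuclideanSpace ℝ (Fin d) → EReal}
    (hh : ProperClosedConvex h) {u p : EuclideanSpace ℝ (Fin d)} (hp : IsProxPt α h u p)
    (v : EuclideanSpace ℝ (Fin d)) : ∃ q, IsProxPt α h v q := by
  obtain ⟨a, ha⟩ := prox_finite hα hh hp
  have hbot := hh.2.1
  have hl : LowerSemicontinuous (fun y => (α : EReal) * h y + ((1 / 2 * ‖y - v‖ ^ 2 : ℝ) : EReal)) := by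
    apply LowerSemicontinuous.add'
    · refine Continuous.comp_lowerSemicontinuous (g := fun z : EReal => (α : EReal) * z) ?_ hh.2.2.1 ?_
      · rw [continuous_iff_continuousAt]
        intro z
        have : ContinuousAt (fun p : EReal × EReal => p.1 * p.2) ((α : EReal), z) := by
          apply EReal.continuousAt_mul <;> simp [hα.ne']
        exact ContinuousAt.comp (f := fun z : EReal => ((α : EReal), z)) this (by fun_prop)
      · intro x y hxy
        exact mul_le_mul_of_nonneg_left hxy (by exact_mod_cast hα.le)
    · apply Continuous.lowerSemicontinuous
      exact continuous_coe_real_ereal.comp (by fun_prop)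
    · intro x
      apply EReal.continuousAt_add
      · right; exact EReal.coe_ne_bot _
      · right; exact EReal.coe_ne_top _
  have hp0 : p ∈ Metric.closedBall p (2 * ‖u - v‖) := Metric.mem_closedBall_self (by positivity)
  obtain ⟨q, -, hq⟩ := LowerSemicontinuousOn.exists_isMinOn ⟨p, hp0⟩
    (isCompact_closedBall p (2 * ‖u - v‖)) (hl.lowerSemicontinuousOn _)
  refine ⟨q, fun y => ?_⟩
  by_cases hy : y ∈ Metric.closedBall p (2 * ‖u - v‖)
  · exact hq hy
  refine le_trans (hq hp0) ?_
  beta_reduce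
  rw [ha]
  by_cases ht : h y = ⊤
  · rw [ht, EReal.coe_mul_top_of_pos hα, EReal.top_add_coe]; exact le_top
  have hb : h y = ((h y).toReal : ℝ) := (EReal.coe_toReal ht (hbot y)).symm
  have h1 := prox_opt hα hh hp ha hb
  generalize (h y).toReal = b at hb h1
  rw [hb]
  norm_cast
  rw [Metric.mem_closedBall, dist_eq_norm, not_le] at hy
  have e : y - v = (p - v) + (y - p) := by abel
  have e2 : ⟪p - v, y - p⟫ = ⟪p - u, y - p⟫ + ⟪u - v, y - p⟫ := by
    rw [← inner_add_left]; congr 1; abel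
  rw [e, norm_add_sq_real, e2]
  have h3 := abs_le.1 (abs_real_inner_le_norm (u - v) (y - p))
  nlinarith [norm_nonneg (y - p), norm_nonneg (u - v)]

lemma line_deriv {f : EuclideanSpace ℝ (Fin d) → ℝ} {f' : EuclideanSpace ℝ (Fin d) → EuclideanSpace ℝ (Fin d)}
    (hg : ∀ x, HasGradientAt f (f' x) x) (x v : EuclideanSpace ℝ (Fin d)) (t : ℝ) :
    HasDerivAt (fun t : ℝ => f (x + t • v)) ⟪f' (x + t • v), v⟫ t := by
  have h1 := (hg (x + t • v)).hasFDerivAt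
  have h2 : HasDerivAt (fun t : ℝ => x + t • v) v t := by
    simpa using ((hasDerivAt_id t).smul_const v).const_add x
  have h3 := h1.comp_hasDerivAt t h2
  rw [InnerProductSpace.toDual_apply_apply] at h3
  exact h3

lemma descent {f : EuclideanSpace ℝ (Fin d) → ℝ} {f' : EuclideanSpace ℝ (Fin d) → EuclideanSpace ℝ (Fin d)}
    (hg : ∀ x, HasGradientAt f (f' x) x) {L : ℝ}
    (hlip : ∀ x y, ‖f' x - f' y‖ ≤ L * ‖x - y‖) (x v : EuclideanSpace ℝ (Fin d)) :
    f (x + v) ≤ f x + ⟪f' x, v⟫ + L / 2 * ‖v‖^2 := by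
  have hd : ∀ t : ℝ, HasDerivAt (fun t : ℝ => f (x + t • v) - t * ⟪f' x, v⟫ - t^2 * (L / 2 * ‖v‖^2))
      (⟪f' (x + t • v), v⟫ - ⟪f' x, v⟫ - (2 * t) * (L / 2 * ‖v‖^2)) t := by
    intro t
    have a1 := (hasDerivAt_id t).mul_const ⟪f' x, v⟫
    have a2 := (hasDerivAt_pow 2 t).mul_const (L / 2 * ‖v‖^2)
    have a3 := ((line_deriv hg x v t).sub a1).sub a2
    refine a3.congr_deriv ?_
    simp
  have hm : AntitoneOn (fun t : ℝ => f (x + t • v) - t * ⟪f' x, v⟫ - t^2 * (L / 2 * ‖v‖^2)) (Set.Icc 0 1) := by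
    apply antitoneOn_of_deriv_nonpos (convex_Icc 0 1)
    · exact fun t _ => (hd t).continuousAt.continuousWithinAt
    · exact fun t _ => (hd t).differentiableAt.differentiableWithinAt
    · intro t ht
      rw [interior_Icc] at ht
      rw [(hd t).deriv, ← inner_sub_left]
      have h1 := real_inner_le_norm (f' (x + t • v) - f' x) v
      have h2 := hlip (x + t • v) x
      rw [add_sub_cancel_left, norm_smul, Real.norm_eq_abs, abs_of_pos ht.1] at h2
      nlinarith [norm_nonneg v]
  have := hm (Set.left_mem_Icc.2 zero_le_one) (Set.right_mem_Icc.2 zero_le_one) zero_le_one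
  simp at this
  linarith

lemma convex_lower {f : EuclideanSpace ℝ (Fin d) → ℝ} {f' : EuclideanSpace ℝ (Fin d) → EuclideanSpace ℝ (Fin d)}
    (hg : ∀ x, HasGradientAt f (f' x) x)
    (hmono : ∀ x y, 0 ≤ ⟪f' x - f' y, x - y⟫) (x v : EuclideanSpace ℝ (Fin d)) :
    f x + ⟪f' x, v⟫ ≤ f (x + v) := by
  have hd : ∀ t : ℝ, HasDerivAt (fun t : ℝ => f (x + t • v) - t * ⟪f' x, v⟫)
      (⟪f' (x + t • v), v⟫ - ⟪f' x, v⟫) t := by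
    intro t
    have a1 := (hasDerivAt_id t).mul_const ⟪f' x, v⟫
    have a3 := (line_deriv hg x v t).sub a1
    refine a3.congr_deriv ?_
    simp
  have hm : MonotoneOn (fun t : ℝ => f (x + t • v) - t * ⟪f' x, v⟫) (Set.Icc 0 1) := by
    apply monotoneOn_of_deriv_nonneg (convex_Icc 0 1)
    · exact fun t _ => (hd t).continuousAt.continuousWithinAt
    · exact fun t _ => (hd t).differentiableAt.differentiableWithinAt
    · intro t ht
      rw [interior_Icc] at ht
      rw [(hd t).deriv, ← inner_sub_left]
      have h2 := hmono (x + t • v) x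
      rw [add_sub_cancel_left, inner_smul_right] at h2
      exact nonneg_of_mul_nonneg_right h2 ht.1
  have := hm (Set.left_mem_Icc.2 zero_le_one) (Set.right_mem_Icc.2 zero_le_one) zero_le_one
  simp at this
  linarith

lemma coco_half {f : EuclideanSpace ℝ (Fin d) → ℝ} {f' : EuclideanSpace ℝ (Fin d) → EuclideanSpace ℝ (Fin d)}
    (hg : ∀ x, HasGradientAt f (f' x) x) {L : ℝ} (hL : 0 < L)
    (hlip : ∀ x y, ‖f' x - f' y‖ ≤ L * ‖x - y‖)
    (hmono : ∀ x y, 0 ≤ ⟪f' x - f' y, x - y⟫) (x y : EuclideanSpace ℝ (Fin d)) :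
    f x + ⟪f' x, y - x⟫ + 1 / (2 * L) * ‖f' y - f' x‖^2 ≤ f y := by
  set g := f' y - f' x with hgdef
  have h1 := convex_lower hg hmono x ((y - x) + (-(1 / L)) • g)
  have h2 := descent hg hlip y ((-(1 / L)) • g)
  have e : x + ((y - x) + (-(1 / L)) • g) = y + (-(1 / L)) • g := by abel
  rw [e, inner_add_right, inner_smul_right] at h1
  rw [inner_smul_right, norm_smul, mul_pow, Real.norm_eq_abs, sq_abs] at h2
  have h3 : ⟪f' y, g⟫ - ⟪f' x, g⟫ = ‖g‖^2 := by
    rw [← inner_sub_left, ← hgdef, real_inner_self_eq_norm_sq]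
  have h4 : ⟪f' y, g⟫ = ⟪f' x, g⟫ + ‖g‖^2 := by linarith
  rw [h4] at h2
  have h5 : L / 2 * ((-(1 / L))^2 * ‖g‖^2) = 1 / (2 * L) * ‖g‖^2 := by field_simp
  have h6 : (1 / L) * ‖g‖^2 = 2 * (1 / (2 * L) * ‖g‖^2) := by field_simp
  rw [h5] at h2
  nlinarith

lemma cocoercive {f : EuclideanSpace ℝ (Fin d) → ℝ} {f' : EuclideanSpace ℝ (Fin d) → EuclideanSpace ℝ (Fin d)}
    (hg : ∀ x, HasGradientAt f (f' x) x) {L : ℝ} (hL : 0 < L)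
    (hlip : ∀ x y, ‖f' x - f' y‖ ≤ L * ‖x - y‖)
    (hmono : ∀ x y, 0 ≤ ⟪f' x - f' y, x - y⟫) (x y : EuclideanSpace ℝ (Fin d)) :
    ‖f' x - f' y‖^2 ≤ L * ⟪f' x - f' y, x - y⟫ := by
  have h1 := coco_half hg hL hlip hmono x y
  have h2 := coco_half hg hL hlip hmono y x
  rw [norm_sub_rev] at h1
  have e : ⟪f' x - f' y, x - y⟫ = - ⟪f' x, y - x⟫ - ⟪f' y, x - y⟫ := by
    rw [← neg_sub x y, inner_neg_right, inner_sub_left]; ring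
  have h6 : 1 / L * ‖f' x - f' y‖^2 = 2 * (1 / (2 * L) * ‖f' x - f' y‖^2) := by field_simp
  have h7 : 1 / L * ‖f' x - f' y‖^2 ≤ ⟪f' x - f' y, x - y⟫ := by linarith
  rw [one_div_mul_eq_div, div_le_iff₀ hL] at h7
  linarith

lemma grad_step {f : EuclideanSpace ℝ (Fin d) → ℝ} {f' : EuclideanSpace ℝ (Fin d) → EuclideanSpace ℝ (Fin d)}
    (hg : ∀ x, HasGradientAt f (f' x) x) {L μ w α : ℝ} (hL : 0 < L) (hμ : 0 < μ) (hw : 0 < w)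
    (hα0 : 0 < α) (hα1 : α < 2 * (w / L))
    (hlip : ∀ x y, ‖f' x - f' y‖ ≤ L * ‖x - y‖)
    (hsc : ∀ x y, μ * ‖x - y‖ ^ 2 ≤ ⟪f' x - f' y, x - y⟫) :
    ∃ c : ℝ, 0 ≤ c ∧ c < w ∧ ∀ x y, ‖w • (x - y) - α • (f' x - f' y)‖ ≤ c * ‖x - y‖ := by
  have hm : ∀ x y, 0 ≤ ⟪f' x - f' y, x - y⟫ := fun x y => le_trans (by positivity) (hsc x y)
  have hD : 0 < 2 * w - α * L := by
    rw [mul_div_assoc', lt_div_iff₀ hL] at hα1; linarith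
  have hE : 0 < α * (2 * w - α * L) * μ := by positivity
  refine ⟨√(w^2 - α * (2 * w - α * L) * μ), Real.sqrt_nonneg _, ?_, fun x y => ?_⟩
  · rw [Real.sqrt_lt' hw]; linarith
  · have h1 := cocoercive hg hL hlip hm x y
    have h2 := hsc x y
    have h3 : ‖w • (x - y) - α • (f' x - f' y)‖^2 ≤ (w^2 - α * (2 * w - α * L) * μ) * ‖x - y‖^2 := by
      rw [norm_sub_sq_real, inner_smul_left, inner_smul_right, norm_smul, norm_smul, mul_pow,
        mul_pow, Real.norm_eq_abs, Real.norm_eq_abs, sq_abs, sq_abs, real_inner_comm]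
      simp only [conj_trivial]
      have h4 := mul_le_mul_of_nonneg_left h1 (sq_nonneg α)
      have h5 := mul_le_mul_of_nonneg_left h2 (mul_pos hα0 hD).le
      nlinarith
    rw [← Real.sqrt_sq (norm_nonneg (x - y)), ← Real.sqrt_mul' _ (sq_nonneg _)]
    exact Real.le_sqrt_of_sq_le h3

end helpers

lemma async_conv {n : ℕ} (P : Fin n → Fin n → Prop) (e : ℕ → Fin n → ℝ) (he : ∀ k i, 0 ≤ e k i)
    (K : Fin n → Set ℕ) (s : Fin n → Fin n → ℕ → ℕ) (hs_le : ∀ i j k, s i j k ≤ k)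
    (hKinf : ∀ i, (K i).Infinite)
    (hstot : ∀ i j, P i j → Tendsto (fun k => s i j k) atTop atTop)
    (ρ : ℝ) (hρ0 : 0 ≤ ρ) (hρ1 : ρ < 1)
    (hupd : ∀ i k, k ∈ K i → ∀ M, 0 ≤ M → (∀ j, P i j → e (s i j k) j ≤ M) → e (k + 1) i ≤ ρ * M)
    (hkeep : ∀ i k, k ∉ K i → e (k + 1) i = e k i) :
    ∀ i, Tendsto (fun k => e k i) atTop (nhds 0) := by
  set M0 := ∑ i, e 0 i with hM0
  have hM0n : 0 ≤ M0 := Finset.sum_nonneg fun i _ => he 0 i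
  have hb : ∀ k, ∀ i, e k i ≤ M0 := by
    intro k
    induction k using Nat.strong_induction_on with
    | _ k ih =>
      intro i
      rcases k with _ | k
      · exact Finset.single_le_sum (f := fun i => e 0 i) (fun i _ => he 0 i) (Finset.mem_univ i)
      · by_cases hk : k ∈ K i
        · have := hupd i k hk M0 hM0n (fun j _ => ih _ (Nat.lt_succ_of_le (hs_le i j k)) j)
          nlinarith
        · rw [hkeep i k hk]; exact ih k (Nat.lt_succ_self k) i
  have hm : ∀ m : ℕ, ∀ᶠ k in atTop, ∀ i, e k i ≤ ρ^m * M0 := by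
    intro m
    induction m with
    | zero => exact Eventually.of_forall fun k i => by simpa using hb k i
    | succ m ih =>
      have hB : 0 ≤ ρ^m * M0 := by positivity
      rw [eventually_all]
      intro i
      have h1 : ∀ᶠ k in atTop, ∀ j, P i j → e (s i j k) j ≤ ρ^m * M0 := by
        rw [eventually_all]
        intro j
        by_cases hP : P i j
        · filter_upwards [(hstot i j hP).eventually ih] with k hk _ using hk j
        · exact Eventually.of_forall fun k h => absurd h hP
      obtain ⟨N, hN⟩ := eventually_atTop.1 h1
      obtain ⟨k0, hk0, hk0N⟩ := (hKinf i).exists_gt N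
      refine eventually_atTop.2 ⟨k0 + 1, fun k hk => ?_⟩
      have hup : ∀ k, N ≤ k → k ∈ K i → e (k + 1) i ≤ ρ^(m+1) * M0 := fun k hkN hkK => by
        have := hupd i k hkK _ hB (hN k hkN)
        rw [pow_succ]; linarith
      induction k, hk using Nat.le_induction with
      | base => exact hup k0 hk0N.le hk0
      | succ k hk ih2 =>
        by_cases hkK : k ∈ K i
        · exact hup k (by omega) hkK
        · rw [hkeep i k hkK]; exact ih2
  intro i
  rw [Metric.tendsto_atTop]
  intro ε hε
  have ht : Tendsto (fun m : ℕ => ρ^m * M0) atTop (nhds 0) := by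
    simpa using (tendsto_pow_atTop_nhds_zero_of_lt_one hρ0 hρ1).mul_const M0
  obtain ⟨m, hmε⟩ := (ht.eventually (gt_mem_nhds hε)).exists
  obtain ⟨N, hN⟩ := eventually_atTop.1 (hm m)
  refine ⟨N, fun k hk => ?_⟩
  rw [Real.dist_eq, sub_zero, abs_of_nonneg (he k i)]
  exact (hN k hk i).trans_lt hmε

/-- **Theorem 1, total asynchrony.** Under strong convexity, smoothness,
the delay-free step-size condition `0 < α < 2·minᵢ (wᵢᵢ/Lᵢ)`, and total asynchrony
(every `Kᵢ` infinite, `sᵢⱼᵏ → ∞`), the asynchronous Prox-DGD iterates converge to the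
unique fixed point of synchronous Prox-DGD. -/
theorem stmt11 (n d : ℕ) (hn : 0 < n)
    (W : Fin n → Fin n → ℝ)
    (hWsymm : ∀ i j, W i j = W j i)
    (hWnonneg : ∀ i j, 0 ≤ W i j)
    (hWstoch : ∀ i, ∑ j, W i j = 1)
    (hWdiag : ∀ i, 0 < W i i)
    (f : Fin n → EuclideanSpace ℝ (Fin d) → ℝ)
    (f' : Fin n → EuclideanSpace ℝ (Fin d) → EuclideanSpace ℝ (Fin d))
    (hgrad : ∀ i x, HasGradientAt (f i) (f' i x) x)
    (μ : Fin n → ℝ) (hμ : ∀ i, 0 < μ i)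
    (hsc : ∀ i x y, μ i * ‖x - y‖ ^ 2 ≤ ⟪f' i x - f' i y, x - y⟫)
    (L : Fin n → ℝ) (hL : ∀ i, 0 < L i)
    (hlip : ∀ i x y, ‖f' i x - f' i y‖ ≤ L i * ‖x - y‖)
    (h : Fin n → EuclideanSpace ℝ (Fin d) → EReal)
    (hh : ∀ i, ProperClosedConvex (h i))
    (α : ℝ) (hα0 : 0 < α) (hα1 : ∀ i, α < 2 * (W i i / L i))
    -- the asynchronous iterates, activation sets, and delayed indices
    (x : ℕ → Fin n → EuclideanSpace ℝ (Fin d))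
    (K : Fin n → Set ℕ)
    (s : Fin n → Fin n → ℕ → ℕ)
    (hs_le : ∀ i j k, s i j k ≤ k)
    (hs_self : ∀ i k, s i i k = k)
    -- the asynchronous Prox-DGD recursion
    (hupd : ∀ i k, k ∈ K i →
      IsProxPt α (h i) ((∑ j, W i j • x (s i j k) j) - α • f' i (x k i)) (x (k + 1) i))
    (hkeep : ∀ i k, k ∉ K i → x (k + 1) i = x k i)
    -- total asynchrony
    (hKinf : ∀ i, (K i).Infinite)
    (hstot : ∀ i j, 0 < W i j → Tendsto (fun k => s i j k) atTop atTop) :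
    ∃ xstar : Fin n → EuclideanSpace ℝ (Fin d),
      (∀ i, IsProxPt α (h i) ((∑ j, W i j • xstar j) - α • f' i (xstar i)) (xstar i)) ∧
      (∀ y : Fin n → EuclideanSpace ℝ (Fin d),
        (∀ i, IsProxPt α (h i) ((∑ j, W i j • y j) - α • f' i (y i)) (y i)) → y = xstar) ∧
      Tendsto x atTop (nhds xstar) := by
  have hEx : ∀ i, ∃ c : ℝ, 0 ≤ c ∧ c < W i i ∧ ∀ x y,
      ‖W i i • (x - y) - α • (f' i x - f' i y)‖ ≤ c * ‖x - y‖ := fun i =>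
    grad_step (hgrad i) (hL i) (hμ i) (hWdiag i) hα0 (hα1 i) (hlip i) (hsc i)
  choose c hc0 hcW hc using hEx
  have : Nonempty (Fin n) := ⟨⟨0, hn⟩⟩
  obtain ⟨i0, hi0⟩ := Finite.exists_max (fun i => 1 - W i i + c i)
  set ρ := 1 - W i0 i0 + c i0 with hρ
  have hWle : ∀ i, W i i ≤ 1 := fun i => by
    rw [← hWstoch i]
    exact Finset.single_le_sum (f := fun j => W i j) (fun j _ => hWnonneg i j) (Finset.mem_univ i)
  have hρ0 : 0 ≤ ρ := by have := hWle i0; have := hc0 i0; linarith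
  have hρ1 : ρ < 1 := by have := hcW i0; linarith
  have master : ∀ i (z w : Fin n → EuclideanSpace ℝ (Fin d)) (p q : EuclideanSpace ℝ (Fin d)) (M : ℝ),
      0 ≤ M → IsProxPt α (h i) ((∑ j, W i j • z j) - α • f' i (z i)) p →
      IsProxPt α (h i) ((∑ j, W i j • w j) - α • f' i (w i)) q →
      (∀ j, 0 < W i j → ‖z j - w j‖ ≤ M) → ‖p - q‖ ≤ ρ * M := by
    intro i z w p q M hM hp hq hzw
    refine (prox_nonexp hα0 (hh i) hp hq).trans ?_
    have hrest : ∑ j ∈ Finset.univ.erase i, W i j = 1 - W i i := by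
      rw [← hWstoch i, ← Finset.add_sum_erase _ _ (Finset.mem_univ i)]; ring
    have e : (∑ j, W i j • z j) - α • f' i (z i) - ((∑ j, W i j • w j) - α • f' i (w i))
        = (W i i • (z i - w i) - α • (f' i (z i) - f' i (w i)))
          + ∑ j ∈ Finset.univ.erase i, W i j • (z j - w j) := by
      simp only [smul_sub, Finset.sum_sub_distrib]
      rw [← Finset.add_sum_erase _ (fun j => W i j • z j) (Finset.mem_univ i),
        ← Finset.add_sum_erase _ (fun j => W i j • w j) (Finset.mem_univ i)]
      abel
    rw [e]
    have h1 : ‖∑ j ∈ Finset.univ.erase i, W i j • (z j - w j)‖ ≤ (1 - W i i) * M := by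
      rw [← hrest, Finset.sum_mul]
      refine norm_sum_le_of_le _ fun j _ => ?_
      rw [norm_smul, Real.norm_eq_abs, abs_of_nonneg (hWnonneg i j)]
      rcases (hWnonneg i j).eq_or_lt with h0 | h0
      · rw [← h0]; simp
      · exact mul_le_mul_of_nonneg_left (hzw j h0) h0.le
    have h2 : ‖W i i • (z i - w i) - α • (f' i (z i) - f' i (w i))‖ ≤ c i * M :=
      (hc i _ _).trans (mul_le_mul_of_nonneg_left (hzw i (hWdiag i)) (hc0 i))
    have h3 := mul_le_mul_of_nonneg_right (hi0 i) hM
    refine (norm_add_le _ _).trans ?_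
    linarith
  have hT : ∀ (z : Fin n → EuclideanSpace ℝ (Fin d)) i, ∃ p,
      IsProxPt α (h i) ((∑ j, W i j • z j) - α • f' i (z i)) p := by
    intro z i
    obtain ⟨k, hk⟩ := (hKinf i).nonempty
    exact prox_exists hα0 (hh i) (hupd i k hk) _
  choose T hTp using hT
  have hcon : ContractingWith ⟨ρ, hρ0⟩ T := by
    refine ⟨by exact_mod_cast hρ1, LipschitzWith.of_dist_le_mul fun z w => ?_⟩
    have hnn : 0 ≤ ρ * dist z w := by positivity
    refine (dist_pi_le_iff hnn).2 fun i => ?_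
    rw [dist_eq_norm]
    refine master i z w _ _ _ dist_nonneg (hTp z i) (hTp w i) fun j _ => ?_
    rw [← dist_eq_norm]
    exact dist_le_pi_dist z w j
  obtain ⟨xs, hxs⟩ : ∃ xs, T xs = xs := ⟨_, hcon.fixedPoint_isFixedPt⟩
  have hfix : ∀ i, IsProxPt α (h i) ((∑ j, W i j • xs j) - α • f' i (xs i)) (xs i) := by
    intro i
    have := hTp xs i
    rwa [hxs] at this
  refine ⟨xs, hfix, fun y hy => ?_, ?_⟩
  · have h1 : dist y xs ≤ ρ * dist y xs := by
      have hnn : 0 ≤ ρ * dist y xs := by positivity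
      refine (dist_pi_le_iff hnn).2 fun i => ?_
      rw [dist_eq_norm]
      refine master i y xs _ _ _ dist_nonneg (hy i) (hfix i) fun j _ => ?_
      rw [← dist_eq_norm]
      exact dist_le_pi_dist y xs j
    have h2 : 0 ≤ dist y xs := dist_nonneg
    exact dist_le_zero.1 (by nlinarith)
  · rw [tendsto_pi_nhds]
    intro i
    rw [tendsto_iff_norm_sub_tendsto_zero]
    refine async_conv (fun i j => 0 < W i j) (fun k i => ‖x k i - xs i‖) (fun _ _ => norm_nonneg _)
      K s hs_le hKinf hstot ρ hρ0 hρ1 ?_ ?_ i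
    · intro i k hk M hM hj
      refine master i (fun j => x (s i j k) j) xs _ _ M hM ?_ (hfix i) hj
      simp only [hs_self]
      exact hupd i k hk
    · intro i k hk
      simp only [hkeep i k hk]
end

section
/- (Theorem 2, linear rate under partial asynchrony and strong convexity.) In the setting of the asynchronous Prox-DGD recursion with W symmetric nonnegative stochastic, w_{ii} > 0, each f_i μ_i-strongly convex with L_i-Lipschitz gradient, each h_i proper closed convex, 0 < α < 2·min_i (w_{ii}/L_i), and partial asynchrony with constants B, D ∈ ℕ (every window {k,…,k+B} meets each K_i, and k − D ≤ s_{ij}^k ≤ k for k ∈ K_i), let x* be the unique fixed point of synchronous Prox-DGD. Then for all k ∈ ℕ, ‖x^k − x*‖_∞^b ≤ ρ^{⌊k/(B+D+1)⌋} · ‖x^0 − x*‖_∞^b, where ρ = sqrt( 1 − α·min_i ( μ_i (2 − αL_i/w_{ii}) ) ). -/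
open scoped RealInnerProductSpace

section Helpers

variable {E : Type*} [NormedAddCommGroup E] [InnerProductSpace ℝ E] [CompleteSpace E]

theorem aux_desc (f : E → ℝ) (f' : E → E) (hg : ∀ x, HasGradientAt f (f' x) x)
    (x v : E) (C : ℝ) (hC : ∀ t : ℝ, 0 ≤ t → ⟪f' (x + t • v) - f' x, v⟫ ≤ C * t) :
    f (x + v) - f x - ⟪f' x, v⟫ ≤ C / 2 := by
  have hd : ∀ t : ℝ, HasDerivAt (fun t : ℝ => f (x + t • v) - t * ⟪f' x, v⟫ - C / 2 * t ^ 2)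
      (⟪f' (x + t • v) - f' x, v⟫ - C * t) t := by
    intro t
    have h1 : HasDerivAt (fun t : ℝ => x + t • v) v t := by
      simpa using ((hasDerivAt_id t).smul_const v).const_add x
    have h2 := ((hg (x + t • v)).hasFDerivAt).comp_hasDerivAt t h1
    have h3 := (h2.sub ((hasDerivAt_id t).mul_const ⟪f' x, v⟫)).sub
      (((hasDerivAt_id t).pow 2).const_mul (C / 2))
    have h4 := h3.congr_deriv (g' := ⟪f' (x + t • v) - f' x, v⟫ - C * t) (by
      simp [inner_sub_left]
      ring)
    exact h4
  have ha : AntitoneOn (fun t : ℝ => f (x + t • v) - t * ⟪f' x, v⟫ - C / 2 * t ^ 2)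
      (Set.Icc 0 1) := by
    apply antitoneOn_of_deriv_nonpos (convex_Icc 0 1)
    · exact fun t _ => (hd t).continuousAt.continuousWithinAt
    · exact fun t _ => (hd t).differentiableAt.differentiableWithinAt
    · intro t ht
      rw [(hd t).deriv]
      rw [interior_Icc] at ht
      linarith [hC t ht.1.le]
  have := ha (Set.left_mem_Icc.2 zero_le_one) (Set.right_mem_Icc.2 zero_le_one) zero_le_one
  simp at this
  linarith

theorem aux_half (f : E → ℝ) (f' : E → E) (hg : ∀ x, HasGradientAt f (f' x) x)
    (L : ℝ) (hL : 0 < L) (hm : ∀ x y, 0 ≤ ⟪f' x - f' y, x - y⟫)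
    (hl : ∀ x y, ‖f' x - f' y‖ ≤ L * ‖x - y‖) (x y : E) :
    ‖f' x - f' y‖ ^ 2 / (2 * L) ≤ f y - f x - ⟪f' x, y - x⟫ := by
  -- lower bound at z from x, upper bound at z from y
  set w : E := -(1 / L) • (f' y - f' x) with hw
  have h1 := aux_desc f f' hg y w (L * ‖w‖ ^ 2) (by
    intro t ht
    have := real_inner_le_norm (f' (y + t • w) - f' y) w
    have h2 := hl (y + t • w) y
    rw [add_sub_cancel_left, norm_smul, Real.norm_of_nonneg ht] at h2
    nlinarith [norm_nonneg w])
  have h2 := aux_desc (fun z => - f z) (fun z => - f' z) (fun z => by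
      have := (hg z).hasFDerivAt.neg
      rw [hasGradientAt_iff_hasFDerivAt]
      rw [map_neg]
      exact this) x (y + w - x) 0 (by
    intro t ht
    rcases ht.eq_or_lt with rfl | ht
    · simp
    have := hm (x + t • (y + w - x)) x
    rw [add_sub_cancel_left, inner_smul_right] at this
    have := nonneg_of_mul_nonneg_right this ht
    rw [show -f' (x + t • (y + w - x)) - -f' x = -(f' (x + t • (y + w - x)) - f' x) by abel,
      inner_neg_left]
    linarith)
  simp only [add_sub_cancel, inner_neg_left] at h2
  have e1 : ⟪f' x, y + w - x⟫ = ⟪f' x, y - x⟫ + ⟪f' x, w⟫ := by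
    rw [← inner_add_right]; congr 1; abel
  have e2 : ⟪f' y, w⟫ - ⟪f' x, w⟫ = -(1 / L) * ‖f' x - f' y‖ ^ 2 := by
    rw [← inner_sub_left, hw, inner_smul_right, real_inner_self_eq_norm_sq, norm_sub_rev]
  have e3 : ‖w‖ ^ 2 = (1 / L) ^ 2 * ‖f' x - f' y‖ ^ 2 := by
    rw [hw, norm_smul, mul_pow, norm_sub_rev]; simp
  have e4 : L * ‖w‖ ^ 2 / 2 = ‖f' x - f' y‖ ^ 2 / (2 * L) := by
    rw [e3]; field_simp
  have e5 : -(1 / L) * ‖f' x - f' y‖ ^ 2 = - 2 * (‖f' x - f' y‖ ^ 2 / (2 * L)) := by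
    field_simp
  linarith

theorem aux_coco (f : E → ℝ) (f' : E → E) (hg : ∀ x, HasGradientAt f (f' x) x)
    (L : ℝ) (hL : 0 < L) (hm : ∀ x y, 0 ≤ ⟪f' x - f' y, x - y⟫)
    (hl : ∀ x y, ‖f' x - f' y‖ ≤ L * ‖x - y‖) (x y : E) :
    ‖f' x - f' y‖ ^ 2 ≤ L * ⟪f' x - f' y, x - y⟫ := by
  have h1 := aux_half f f' hg L hL hm hl x y
  have h2 := aux_half f f' hg L hL hm hl y x
  rw [norm_sub_rev (f' y)] at h2
  have h3 : ‖f' x - f' y‖ ^ 2 / L ≤ ⟪f' x - f' y, x - y⟫ := by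
    have e : ‖f' x - f' y‖ ^ 2 / L = 2 * (‖f' x - f' y‖ ^ 2 / (2 * L)) := by field_simp
    have e2 : ⟪f' x, y - x⟫ = - ⟪f' x, x - y⟫ := by rw [← inner_neg_right]; congr 1; abel
    rw [inner_sub_left]
    linarith
  rw [div_le_iff₀ hL] at h3
  linarith

theorem aux_grad_step (f : E → ℝ) (f' : E → E) (hg : ∀ x, HasGradientAt f (f' x) x)
    (L m b : ℝ) (hL : 0 < L) (hm0 : 0 < m) (hm : ∀ x y, m * ‖x - y‖ ^ 2 ≤ ⟪f' x - f' y, x - y⟫)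
    (hl : ∀ x y, ‖f' x - f' y‖ ≤ L * ‖x - y‖) (hb : 0 < b) (hbL : b * L < 2) (x y : E) :
    ‖(x - y) - b • (f' x - f' y)‖ ^ 2 ≤ (1 - b * (m * (2 - b * L))) * ‖x - y‖ ^ 2 := by
  have hc := aux_coco f f' hg L hL
    (fun x y => le_trans (by positivity) (hm x y)) hl x y
  have h1 := hm x y
  rw [norm_sub_sq_real, inner_smul_right, norm_smul, mul_pow, Real.norm_of_nonneg hb.le,
    real_inner_comm]
  have h2 := mul_le_mul_of_nonneg_left hc (sq_nonneg b)
  have h3 := mul_le_mul_of_nonneg_left h1 (show 0 ≤ b * (2 - b * L) by nlinarith)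
  nlinarith

end Helpers

theorem aux_sqrt (w c : ℝ) (hw : 0 < w) (hw1 : w ≤ 1) (hc : 0 ≤ 1 - c / w) :
    1 - w + w * √(1 - c / w) ≤ √(1 - c) := by
  apply Real.le_sqrt_of_sq_le
  have h1 := Real.sq_sqrt hc
  set r := √(1 - c / w)
  have h2 : c = w * (1 - r ^ 2) := by rw [h1]; field_simp; ring
  rw [h2]
  nlinarith [mul_nonneg (mul_nonneg hw.le (sub_nonneg.2 hw1)) (sq_nonneg (1 - r))]

theorem aux_lim (A C : ℝ) (hC : 0 ≤ C) (h : ∀ t : ℝ, 0 < t → t ≤ 1 → 0 ≤ A + t * C) : 0 ≤ A := by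
  by_contra hA
  push Not at hA
  have hp : 0 < C - A := by linarith
  have := h (-A / (C - A)) (div_pos (by linarith) hp) (by rw [div_le_one hp]; linarith)
  have e : A + -A / (C - A) * C = - (A ^ 2) / (C - A) := by field_simp; ring
  rw [e] at this
  have : 0 < A ^ 2 / (C - A) := div_pos (by nlinarith) hp
  rw [neg_div] at *
  linarith

theorem aux_prox_fin {d : ℕ} (α : ℝ) (hα : 0 < α) (h : EuclideanSpace ℝ (Fin d) → EReal)
    (hh : ProperClosedConvex h) (u p : EuclideanSpace ℝ (Fin d)) (hp : IsProxPt α h u p) :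
    ∃ a : ℝ, h p = a := by
  obtain ⟨⟨z, hz⟩, hb, -, -⟩ := hh
  have hpt : h p ≠ ⊤ := by
    intro hpt
    have := hp z
    obtain ⟨c, hc⟩ : ∃ c : ℝ, h z = c := ⟨(h z).toReal, (EReal.coe_toReal hz (hb z)).symm⟩
    rw [hpt, hc, EReal.coe_mul_top_of_pos hα, EReal.top_add_coe, ← EReal.coe_mul,
      ← EReal.coe_add] at this
    exact EReal.coe_ne_top _ (top_le_iff.1 this)
  exact ⟨(h p).toReal, (EReal.coe_toReal hpt (hb p)).symm⟩

theorem aux_prox_var {d : ℕ} (α : ℝ) (hα : 0 < α) (h : EuclideanSpace ℝ (Fin d) → EReal)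
    (hh : ProperClosedConvex h) (u p q : EuclideanSpace ℝ (Fin d)) (hp : IsProxPt α h u p)
    (a b : ℝ) (ha : h p = a) (hb : h q = b) :
    0 ≤ α * (b - a) + ⟪p - u, q - p⟫ := by
  apply aux_lim _ (1 / 2 * ‖q - p‖ ^ 2) (by positivity)
  intro t ht ht1
  have hc := hh.2.2.2 q p t ht.le ht1
  have hm := hp (t • q + (1 - t) • p)
  rw [ha, hb, ← EReal.coe_mul, ← EReal.coe_mul, ← EReal.coe_add] at hc
  have hc2 := mul_le_mul_of_nonneg_left hc (EReal.coe_nonneg.2 hα.le)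
  have hm2 := hm.trans (add_le_add_left hc2 _)
  rw [ha, ← EReal.coe_mul, ← EReal.coe_mul, ← EReal.coe_add, ← EReal.coe_add,
    EReal.coe_le_coe_iff] at hm2
  have e : t • q + (1 - t) • p - u = (p - u) + t • (q - p) := by module
  rw [e, norm_add_sq_real, inner_smul_right, norm_smul, Real.norm_of_nonneg ht.le] at hm2
  have : 0 ≤ t * (α * (b - a) + ⟪p - u, q - p⟫ + t * (1 / 2 * ‖q - p‖ ^ 2)) := by nlinarith
  exact nonneg_of_mul_nonneg_right this ht

theorem aux_prox {d : ℕ} (α : ℝ) (hα : 0 < α) (h : EuclideanSpace ℝ (Fin d) → EReal)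
    (hh : ProperClosedConvex h) (u v p q : EuclideanSpace ℝ (Fin d)) (hp : IsProxPt α h u p)
    (hq : IsProxPt α h v q) : ‖p - q‖ ≤ ‖u - v‖ := by
  obtain ⟨a, ha⟩ := aux_prox_fin α hα h hh u p hp
  obtain ⟨b, hb⟩ := aux_prox_fin α hα h hh v q hq
  have h1 := aux_prox_var α hα h hh u p q hp a b ha hb
  have h2 := aux_prox_var α hα h hh v q p hq b a hb ha
  have e : ⟪p - u, q - p⟫ + ⟪q - v, p - q⟫ = ⟪u - v, p - q⟫ - ‖p - q‖ ^ 2 := by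
    rw [← real_inner_self_eq_norm_sq, ← inner_sub_left, ← neg_sub p q, inner_neg_right,
      ← inner_neg_left, ← inner_add_left]
    congr 1; abel
  have h3 := real_inner_le_norm (u - v) (p - q)
  by_contra hlt
  push Not at hlt
  nlinarith [norm_nonneg (u - v)]

/-- **Theorem 2, linear rate under partial asynchrony and strong
convexity.** With `ρ = √(1 − α·minᵢ (μᵢ(2 − αLᵢ/wᵢᵢ)))` and partial asynchrony
constants `B, D`, the asynchronous Prox-DGD iterates satisfy
`‖x^k − x⋆‖∞ᵇ ≤ ρ^⌊k/(B+D+1)⌋·‖x⁰ − x⋆‖∞ᵇ` in the block-maximum norm. -/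
theorem stmt13 (n d : ℕ) (hn : 0 < n)
    (W : Fin n → Fin n → ℝ)
    (hWsymm : ∀ i j, W i j = W j i)
    (hWnonneg : ∀ i j, 0 ≤ W i j)
    (hWstoch : ∀ i, ∑ j, W i j = 1)
    (hWdiag : ∀ i, 0 < W i i)
    (f : Fin n → EuclideanSpace ℝ (Fin d) → ℝ)
    (f' : Fin n → EuclideanSpace ℝ (Fin d) → EuclideanSpace ℝ (Fin d))
    (hgrad : ∀ i x, HasGradientAt (f i) (f' i x) x)
    (μ : Fin n → ℝ) (hμ : ∀ i, 0 < μ i)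
    (hsc : ∀ i x y, μ i * ‖x - y‖ ^ 2 ≤ ⟪f' i x - f' i y, x - y⟫)
    (L : Fin n → ℝ) (hL : ∀ i, 0 < L i)
    (hlip : ∀ i x y, ‖f' i x - f' i y‖ ≤ L i * ‖x - y‖)
    (h : Fin n → EuclideanSpace ℝ (Fin d) → EReal)
    (hh : ∀ i, ProperClosedConvex (h i))
    (α : ℝ) (hα0 : 0 < α) (hα1 : ∀ i, α < 2 * (W i i / L i))
    -- the asynchronous iterates, activation sets, and delayed indices
    (x : ℕ → Fin n → EuclideanSpace ℝ (Fin d))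
    (K : Fin n → Set ℕ)
    (s : Fin n → Fin n → ℕ → ℕ)
    (hs_le : ∀ i j k, s i j k ≤ k)
    (hs_self : ∀ i k, s i i k = k)
    -- the asynchronous Prox-DGD recursion
    (hupd : ∀ i k, k ∈ K i →
      IsProxPt α (h i) ((∑ j, W i j • x (s i j k) j) - α • f' i (x k i)) (x (k + 1) i))
    (hkeep : ∀ i k, k ∉ K i → x (k + 1) i = x k i)
    -- partial asynchrony with constants B and D
    (B D : ℕ)
    (hB : ∀ i k, ∃ l, k ≤ l ∧ l ≤ k + B ∧ l ∈ K i)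
    (hD : ∀ i j k, k ∈ K i → k - D ≤ s i j k)
    -- `x⋆` is the (unique) fixed point of synchronous Prox-DGD
    (xstar : Fin n → EuclideanSpace ℝ (Fin d))
    (hfix : ∀ i, IsProxPt α (h i)
      ((∑ j, W i j • xstar j) - α • f' i (xstar i)) (xstar i)) :
    ∀ k : ℕ,
      (⨆ i, ‖x k i - xstar i‖)
        ≤ Real.sqrt (1 - α * ⨅ i, μ i * (2 - α * L i / W i i)) ^ (k / (B + D + 1))
            * ⨆ i, ‖x 0 i - xstar i‖ := by
  have : Nonempty (Fin n) := ⟨⟨0, hn⟩⟩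
  set ρ := Real.sqrt (1 - α * ⨅ i, μ i * (2 - α * L i / W i i)) with hρ
  have hρ0 : 0 ≤ ρ := Real.sqrt_nonneg _
  set M := ⨆ i, ‖x 0 i - xstar i‖ with hM
  have hM0 : 0 ≤ M := Real.iSup_nonneg fun i => norm_nonneg _
  have hWle : ∀ i, W i i ≤ 1 := fun i => by
    rw [← hWstoch i]
    exact Finset.single_le_sum (fun j _ => hWnonneg i j) (Finset.mem_univ i)
  have hbL : ∀ i, α / W i i * L i < 2 := fun i => by
    have := hα1 i
    rw [← mul_div_assoc, lt_div_iff₀ (hL i)] at this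
    rw [div_mul_eq_mul_div, div_lt_iff₀ (hWdiag i)]
    exact this
  -- one step
  have step : ∀ i k (R : ℝ), 0 ≤ R → k ∈ K i → (∀ j, ‖x (s i j k) j - xstar j‖ ≤ R) →
      ‖x (k + 1) i - xstar i‖ ≤ ρ * R := by
    intro i k R hR hk hx
    rcases subsingleton_or_nontrivial (EuclideanSpace ℝ (Fin d)) with hsub | hnt
    · rw [Subsingleton.elim (x (k + 1) i - xstar i) 0, norm_zero]
      positivity
    have hb : 0 < α / W i i := div_pos hα0 (hWdiag i)
    have gs := aux_grad_step (f i) (f' i) (hgrad i) (L i) (μ i) (α / W i i) (hL i) (hμ i) (hsc i)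
      (hlip i) hb (hbL i)
    have hc : 0 ≤ 1 - α / W i i * (μ i * (2 - α / W i i * L i)) := by
      obtain ⟨v, hv⟩ := exists_ne (0 : EuclideanSpace ℝ (Fin d))
      have h1 := (sq_nonneg _).trans (gs v 0)
      rw [sub_zero] at h1
      exact nonneg_of_mul_nonneg_left h1 (by positivity)
    refine (aux_prox α hα0 (h i) (hh i) _ _ _ _ (hupd i k hk) (hfix i)).trans ?_
    have hxi : ‖x k i - xstar i‖ ≤ R := by simpa [hs_self] using hx i
    have key : (∑ j, W i j • x (s i j k) j) - α • f' i (x k i)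
        - ((∑ j, W i j • xstar j) - α • f' i (xstar i))
        = W i i • ((x k i - xstar i) - (α / W i i) • (f' i (x k i) - f' i (xstar i)))
          + ∑ j ∈ Finset.univ.erase i, W i j • (x (s i j k) j - xstar j) := by
      have e0 : (∑ j, W i j • x (s i j k) j) - (∑ j, W i j • xstar j)
          = ∑ j, W i j • (x (s i j k) j - xstar j) := by
        rw [← Finset.sum_sub_distrib]; simp only [smul_sub]
      rw [← Finset.add_sum_erase _ (fun j => W i j • (x (s i j k) j - xstar j))
        (Finset.mem_univ i)] at e0
      simp only [hs_self] at e0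
      rw [smul_sub (W i i), smul_smul, mul_div_cancel₀ _ (hWdiag i).ne']
      rw [sub_sub_sub_comm, e0, smul_sub α]
      abel
    rw [key]
    have h1 : ‖(x k i - xstar i) - (α / W i i) • (f' i (x k i) - f' i (xstar i))‖
        ≤ √(1 - α / W i i * (μ i * (2 - α / W i i * L i))) * R := by
      refine (Real.le_sqrt_of_sq_le (gs _ _)).trans ?_
      rw [Real.sqrt_mul hc, Real.sqrt_sq (norm_nonneg _)]
      exact mul_le_mul_of_nonneg_left hxi (Real.sqrt_nonneg _)
    have h2 : ‖∑ j ∈ Finset.univ.erase i, W i j • (x (s i j k) j - xstar j)‖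
        ≤ (1 - W i i) * R := by
      refine (norm_sum_le _ _).trans ?_
      have e : 1 - W i i = ∑ j ∈ Finset.univ.erase i, W i j := by
        rw [← hWstoch i, ← Finset.add_sum_erase _ _ (Finset.mem_univ i)]; ring
      rw [e, Finset.sum_mul]
      refine Finset.sum_le_sum fun j _ => ?_
      rw [norm_smul, Real.norm_of_nonneg (hWnonneg i j)]
      exact mul_le_mul_of_nonneg_left (hx j) (hWnonneg i j)
    have h3 : 1 - W i i + W i i * √(1 - α / W i i * (μ i * (2 - α / W i i * L i))) ≤ ρ := by
      have e : α / W i i * (μ i * (2 - α / W i i * L i))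
        = (α * (μ i * (2 - α * L i / W i i))) / W i i := by ring
      rw [e] at hc ⊢
      refine (aux_sqrt _ _ (hWdiag i) (hWle i) hc).trans ?_
      apply Real.sqrt_le_sqrt
      have : (⨅ i, μ i * (2 - α * L i / W i i)) ≤ μ i * (2 - α * L i / W i i) :=
        ciInf_le (Set.finite_range _).bddBelow i
      have := mul_le_mul_of_nonneg_left this hα0.le
      linarith
    refine (norm_add_le _ _).trans ?_
    rw [norm_smul, Real.norm_of_nonneg (hWdiag i).le]
    have := mul_le_mul_of_nonneg_left h1 (hWdiag i).le
    have := mul_le_mul_of_nonneg_right h3 hR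
    nlinarith
  have hρ1 : ρ ≤ 1 := by
    rw [hρ, Real.sqrt_le_one]
    have : 0 ≤ ⨅ i, μ i * (2 - α * L i / W i i) := Real.iInf_nonneg fun i => by
      have := hbL i
      rw [div_mul_eq_mul_div] at this
      exact mul_nonneg (hμ i).le (by linarith)
    have := mul_nonneg hα0.le this
    linarith
  have hρm : ∀ R, 0 ≤ R → ρ * R ≤ R := fun R hR => mul_le_of_le_one_left hR hρ1
  have main : ∀ m k, m * (B + D + 1) ≤ k → ∀ i, ‖x k i - xstar i‖ ≤ ρ ^ m * M := by
    intro m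
    induction m with
    | zero =>
      intro k _
      induction k using Nat.strong_induction_on with
      | _ k ih =>
        intro i
        rw [pow_zero, one_mul] at *
        rcases k with _ | k
        · exact le_ciSup (f := fun i => ‖x 0 i - xstar i‖) (Set.finite_range _).bddAbove i
        · by_cases hk : k ∈ K i
          · refine (step i k M hM0 hk fun j => ?_).trans (hρm M hM0)
            exact ih _ (Nat.lt_succ_of_le (hs_le i j k)) (by simp) j
          · rw [hkeep i k hk]
            exact ih k (Nat.lt_succ_self k) (by simp) i
    | succ m ih =>
      intro k hk i
      have hR : 0 ≤ ρ ^ m * M := by positivity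
      have upd : ∀ l, m * (B + D + 1) + D ≤ l → l ∈ K i →
          ‖x (l + 1) i - xstar i‖ ≤ ρ ^ (m + 1) * M := by
        intro l hl hlK
        have := step i l _ hR hlK fun j => ih _ (by have := hD i j l hlK; omega) j
        rw [pow_succ']
        linarith
      obtain ⟨l, hl1, hl2, hlK⟩ := hB i (m * (B + D + 1) + D)
      have hlk : l + 1 ≤ k := by
        have : (m + 1) * (B + D + 1) = m * (B + D + 1) + (B + D + 1) := by ring
        omega
      clear hk
      induction k, hlk using Nat.le_induction with
      | base => exact upd l hl1 hlK
      | succ k hlk ih2 =>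
        by_cases hk : k ∈ K i
        · exact upd k (by omega) hk
        · rw [hkeep i k hk]; exact ih2
  intro k
  exact ciSup_le fun i => main _ k (Nat.div_mul_le_self k _) i
end
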